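/- arXiv:2001.09970 — 3 statements merged into one kernel-verified Lean document; each statement's English description precedes it below -/
import Mathlib

section
/- Under these hypotheses, the set of all nonidentity p-regular elements of G coincides with the set { v·y : v ∈ D, y ∈ E, y ≠ 1 } of products of an element of D with a nonidentity element of E. -/
/-!
Suppose a `p`-singular element `g` lies outside `D`. Its class is one of the at most two
`p`-singular ones, so the nonidentity elements of `D` form a single class of `G`; as `Z(D) ≠ 1`,
`D` is abelian. Let `u ∈ D` be a power of `g` of order `p`. The normal `p`-complement of `C_G(u)`
and the normal `p`-subgroup `D ≤ C_G(u)` centralize each other, whereas faithfulness gives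
`C_G(D) ≤ D`. Hence that complement is trivial and `C_G(u)` is a `p`-group, so `g ∈ C_G(u) ≤ D`.
-/

open Subgroup

/-- A group is `p`-nilpotent if it has a normal `p`-complement, that is, a normal subgroup of order
coprime to `p` and of `p`-power index. -/
def IsPNilpotent (p : ℕ) (H : Type*) [Group H] : Prop :=
  ∃ N : Subgroup H, N.Normal ∧ Nat.Coprime (Nat.card N) p ∧ ∃ n : ℕ, N.index = p ^ n

/-- The conjugacy classes of `p`-singular elements, that is, elements of order divisible by `p`.
In a finite group there are `k(G) - ℓ_p(G)` of them. -/
def singularConjClasses (p : ℕ) (G : Type*) [Group G] : Set (ConjClasses G) :=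
  {c | ∃ g ∈ c.carrier, p ∣ orderOf g}

section

variable {p : ℕ} {G : Type*} [Group G]

theorem mk_mem_singularConjClasses {g : G} (hg : p ∣ orderOf g) :
    ConjClasses.mk g ∈ singularConjClasses p G :=
  ⟨g, ConjClasses.mem_carrier_mk, hg⟩

theorem natCard_conjClasses_eq_add_ncard_singularConjClasses [Finite (ConjClasses G)] :
    Nat.card (ConjClasses G) =
      Nat.card {c : ConjClasses G // ∀ g ∈ c.carrier, ¬ p ∣ orderOf g} +
        (singularConjClasses p G).ncard := by
  have compl_regular :
      {c : ConjClasses G | ∀ g ∈ c.carrier, ¬ p ∣ orderOf g}ᶜ = singularConjClasses p G := by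
    ext c
    simp [singularConjClasses]
  rw [← compl_regular]
  exact (Set.ncard_add_ncard_compl _).symm

theorem isConj_of_ncard_singularConjClasses_le_two [Finite (ConjClasses G)]
    (hcard : (singularConjClasses p G).ncard ≤ 2) {D : Subgroup G} [hD : D.Normal] {a b g : G}
    (ha : a ∈ D) (hb : b ∈ D) (hg : g ∉ D)
    (hpa : p ∣ orderOf a) (hpb : p ∣ orderOf b) (hpg : p ∣ orderOf g) : IsConj a b := by
  by_contra hab
  have mk_ne_mk_of_mem {d : G} (hd : d ∈ D) : ConjClasses.mk d ≠ ConjClasses.mk g := by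
    rw [Ne, ConjClasses.mk_eq_mk_iff_isConj, isConj_iff]
    rintro ⟨c, rfl⟩
    exact hg (hD.conj_mem d hd c)
  refine hcard.not_gt (Set.two_lt_ncard_iff (Set.toFinite _) |>.mpr ⟨.mk a, .mk b, .mk g,
    mk_mem_singularConjClasses hpa, mk_mem_singularConjClasses hpb,
    mk_mem_singularConjClasses hpg, ?_, mk_ne_mk_of_mem ha, mk_ne_mk_of_mem hb⟩)
  rwa [Ne, ConjClasses.mk_eq_mk_iff_isConj]

theorem eq_one_of_mem_of_coprime_orderOf {D : Subgroup G} (hD : IsPGroup p D) {g : G}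
    (hg : g ∈ D) (hcop : (orderOf g).Coprime p) : g = 1 := by
  obtain ⟨k, hk⟩ := hD.exists_orderOf_dvd_pow ⟨g, hg⟩
  rw [orderOf_mk] at hk
  exact orderOf_eq_one_iff.mp ((hcop.pow_right k).eq_one_of_dvd hk)

theorem disjoint_of_coprime_natCard_of_isPGroup {N D : Subgroup G}
    (hN : (Nat.card N).Coprime p) (hD : IsPGroup p D) : Disjoint N D :=
  disjoint_def.mpr fun hxN hxD ↦
    eq_one_of_mem_of_coprime_orderOf hD hxD (hN.of_dvd_left (N.orderOf_dvd_natCard hxN))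

theorem dvd_orderOf_of_mem_of_ne_one [hp : Fact p.Prime] {D : Subgroup G} (hD : IsPGroup p D)
    {g : G} (hg : g ∈ D) (hg1 : g ≠ 1) : p ∣ orderOf g := by
  contrapose! hg1
  exact eq_one_of_mem_of_coprime_orderOf hD hg ((hp.out.coprime_iff_not_dvd.mpr hg1).symm)

theorem le_sylow_of_isPGroup (P : Sylow p G) [P.Normal] {Q : Subgroup G} (hQ : IsPGroup p Q) :
    Q ≤ P :=
  sup_eq_left.mp (P.is_maximal' (P.isPGroup'.to_sup_of_normal_left hQ) le_sup_left)

theorem mem_sylow_of_pow_eq_one (P : Sylow p G) [P.Normal] {g : G} {k : ℕ}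
    (hg : g ^ p ^ k = 1) : g ∈ P := by
  have isPGroup_zpowers : IsPGroup p (zpowers g) :=
    .of_card_dvd_pow (n := k) (Nat.card_zpowers g ▸ orderOf_dvd_of_pow_eq_one hg)
  exact le_sylow_of_isPGroup P isPGroup_zpowers (mem_zpowers g)

theorem le_centralizer_self_of_forall_isConj [Fact p.Prime] {D : Subgroup G} [Finite D]
    [hDn : D.Normal] (hD : IsPGroup p D)
    (hconj : ∀ a ∈ D, a ≠ 1 → ∀ b ∈ D, b ≠ 1 → IsConj a b) : D ≤ centralizer (D : Set G) := by
  intro d hd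
  by_cases hd1 : d = 1
  · exact hd1 ▸ one_mem _
  have : Nontrivial D := D.nontrivial_iff_exists_ne_one.mpr ⟨d, hd, hd1⟩
  have := hD.center_nontrivial
  obtain ⟨⟨⟨z, hzD⟩, hz⟩, hz1⟩ := exists_ne (1 : center D)
  have z_mem_centralizer : z ∈ centralizer (D : Set G) := fun a ha ↦
    congrArg Subtype.val (mem_center_iff.mp hz ⟨a, ha⟩)
  have z_ne_one : z ≠ 1 := by rintro rfl; exact hz1 rfl
  obtain ⟨c, rfl⟩ := isConj_iff.mp (hconj z hzD z_ne_one d hd hd1)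
  exact normal_centralizer.conj_mem z z_mem_centralizer c

theorem centralizer_sylow_le_of_faithful (P : Sylow p G) [P.Normal] {E : Subgroup G}
    (hsup : (P : Subgroup G) ⊔ E = ⊤) (hfaith : Disjoint E (centralizer (P : Set G))) :
    centralizer (P : Set G) ≤ P := by
  intro x hx
  obtain ⟨v, hv, y, hy, rfl⟩ := mem_sup_of_normal_left.mp (hsup ▸ mem_top x)
  obtain ⟨k, hk⟩ := P.isPGroup' ⟨v, hv⟩
  have v_pow : v ^ p ^ k = 1 := congrArg Subtype.val hk
  have comm : Commute v y := by
    simpa using (Commute.refl v).inv_right.mul_right (hx v hv)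
  have pow_eq : (v * y) ^ p ^ k = y ^ p ^ k := by rw [comm.mul_pow, v_pow, one_mul]
  have y_pow : y ^ p ^ k = 1 :=
    disjoint_def.mp hfaith (pow_mem hy _) (pow_eq ▸ pow_mem hx _)
  exact mem_sylow_of_pow_eq_one P (pow_eq.trans y_pow)

theorem isPGroup_of_isPNilpotent_of_centralizer_le {H : Type*} [Group H] (hH : IsPNilpotent p H)
    {Q : Subgroup H} [Q.Normal] (hQ : IsPGroup p Q) (hcent : centralizer (Q : Set H) ≤ Q) :
    IsPGroup p H := by
  obtain ⟨N, hN, hcop, n, hn⟩ := hH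
  have disj : Disjoint N Q := disjoint_of_coprime_natCard_of_isPGroup hcop hQ
  have N_le_centralizer : N ≤ centralizer (Q : Set H) := fun x hx q hq ↦
    (commute_of_normal_of_disjoint N Q hN ‹_› disj x q hx hq).symm
  have N_eq_bot : N = ⊥ := disj.eq_bot_of_le (N_le_centralizer.trans hcent)
  exact .of_card (n := n) (by rw [← hn, N_eq_bot, index_bot])

theorem centralizer_singleton_le_sylow (P : Sylow p G) [P.Normal]
    (hcent : centralizer (P : Set G) ≤ P) {u : G} (hu : u ∈ centralizer (P : Set G))
    (hnilp : IsPNilpotent p (centralizer ({u} : Set G))) : centralizer ({u} : Set G) ≤ P := by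
  set C := centralizer ({u} : Set G)
  have P_le : (P : Subgroup G) ≤ C := fun d hd ↦ mem_centralizer_singleton_iff.mpr (hu d hd)
  have isPGroup_subgroupOf : IsPGroup p ((P : Subgroup G).subgroupOf C) :=
    P.isPGroup'.comap_of_injective C.subtype C.subtype_injective
  have centralizer_le :
      centralizer ((P : Subgroup G).subgroupOf C : Set C) ≤ (P : Subgroup G).subgroupOf C :=
    fun x hx ↦ hcent fun d hd ↦ congrArg Subtype.val (hx ⟨d, P_le hd⟩ hd)
  exact le_sylow_of_isPGroup P
    (isPGroup_of_isPNilpotent_of_centralizer_le hnilp isPGroup_subgroupOf centralizer_le)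

theorem mem_sylow_of_dvd_orderOf [Fact p.Prime] [Finite G] (P : Sylow p G) [P.Normal]
    (hcent : centralizer (P : Set G) ≤ P) (hcard : (singularConjClasses p G).ncard ≤ 2)
    (hnilp : ∀ u ∈ P, orderOf u = p → IsPNilpotent p (centralizer ({u} : Set G)))
    {g : G} (hg : p ∣ orderOf g) : g ∈ P := by
  by_contra hgP
  have P_abelian : (P : Subgroup G) ≤ centralizer (P : Set G) :=
    le_centralizer_self_of_forall_isConj P.isPGroup' fun a ha ha1 b hb hb1 ↦
      isConj_of_ncard_singularConjClasses_le_two hcard ha hb hgP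
        (dvd_orderOf_of_mem_of_ne_one P.isPGroup' ha ha1)
        (dvd_orderOf_of_mem_of_ne_one P.isPGroup' hb hb1) hg
  let u := g ^ (orderOf g / p)
  have orderOf_u : orderOf u = p := orderOf_pow_orderOf_div (orderOf_pos g).ne' hg
  have u_mem : u ∈ P :=
    mem_sylow_of_pow_eq_one P (k := 1) (by rw [pow_one, ← orderOf_dvd_iff_pow_eq_one, orderOf_u])
  refine hgP (centralizer_singleton_le_sylow P hcent (P_abelian u_mem)
    (hnilp u u_mem orderOf_u) ?_)
  exact mem_centralizer_singleton_iff.mpr (Commute.self_pow g _).eq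

theorem setOf_exists_mul_eq_compl {D E : Subgroup G} [D.Normal] (hinf : D ⊓ E = ⊥)
    (hsup : D ⊔ E = ⊤) :
    {g : G | ∃ v ∈ D, ∃ y ∈ E, y ≠ 1 ∧ g = v * y} = (D : Set G)ᶜ := by
  ext g
  constructor
  · rintro ⟨v, hv, y, hy, hy1, rfl⟩ hvy
    have hyD : y ∈ D := (D.mul_mem_cancel_left hv).mp hvy
    exact hy1 (disjoint_def.mp (disjoint_iff.mpr hinf) hyD hy)
  · intro hg
    obtain ⟨v, hv, y, hy, rfl⟩ := mem_sup_of_normal_left.mp (hsup ▸ mem_top g)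
    exact ⟨v, hv, y, hy, fun hy1 ↦ hg (by simpa [hy1] using hv), rfl⟩

theorem stmt_2_general [Fact p.Prime] [Finite G] (P : Sylow p G) [P.Normal] (E : Subgroup G)
    (hinf : (P : Subgroup G) ⊓ E = ⊥) (hsup : (P : Subgroup G) ⊔ E = ⊤)
    (hfaith : Disjoint E (centralizer (P : Set G)))
    (hcard : (singularConjClasses p G).ncard ≤ 2)
    (hnilp : ∀ u ∈ P, orderOf u = p → IsPNilpotent p (centralizer ({u} : Set G))) :
    {g : G | g ≠ 1 ∧ ¬ p ∣ orderOf g} = {g : G | ∃ v ∈ P, ∃ y ∈ E, y ≠ 1 ∧ g = v * y} := by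
  refine Eq.trans ?_ (setOf_exists_mul_eq_compl hinf hsup).symm
  have hcent := centralizer_sylow_le_of_faithful P hsup hfaith
  ext g
  constructor
  · rintro ⟨hg1, hpg⟩ hgP
    exact hpg (dvd_orderOf_of_mem_of_ne_one P.isPGroup' hgP hg1)
  · exact fun hgP ↦ ⟨fun hg1 ↦ hgP (hg1 ▸ one_mem P),
      fun hpg ↦ hgP (mem_sylow_of_dvd_orderOf P hcent hcard hnilp hpg)⟩

end

/-- Hypotheses: `G` is a finite group with normal Sylow `p`-subgroup `D`, `E` is a
`p'`-complement acting faithfully on `D`, `k(G) - ℓ_p(G) = 2`, and the centralizer of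
every element of `D` of order `p` is `p`-nilpotent. -/
theorem stmt_2 {p : ℕ} (hp : p.Prime) {G : Type*} [Group G] [Fintype G]
    (D E : Subgroup G)
    (hDn : D.Normal)
    (hDpgrp : IsPGroup p D)
    (hDsyl : ¬ p ∣ D.index)
    (hEp' : Nat.Coprime (Nat.card E) p)
    (hDEinf : D ⊓ E = ⊥)
    (hDEsup : D ⊔ E = ⊤)
    (hfaith : ∀ y ∈ E, (∀ d ∈ D, y * d = d * y) → y = 1)
    (hkl : Nat.card (ConjClasses G) =
      Nat.card {c : ConjClasses G // ∀ g ∈ c.carrier, ¬ p ∣ orderOf g} + 2)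
    (hnilp : ∀ u : G, u ∈ D → orderOf u = p →
      ∃ N : Subgroup (Subgroup.centralizer ({u} : Set G)), N.Normal ∧
        Nat.Coprime (Nat.card N) p ∧ ∃ n : ℕ, N.index = p ^ n) :
    {g : G | g ≠ 1 ∧ ¬ p ∣ orderOf g} = {g : G | ∃ v ∈ D, ∃ y ∈ E, y ≠ 1 ∧ g = v * y} := by
  have : Fact p.Prime := ⟨hp⟩
  have : (hDpgrp.toSylow hDsyl).Normal := hDn
  have hcard : (singularConjClasses p G).ncard ≤ 2 := by
    have := natCard_conjClasses_eq_add_ncard_singularConjClasses (p := p) (G := G)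
    omega
  exact stmt_2_general (hDpgrp.toSylow hDsyl) E hDEinf hDEsup
    (disjoint_def.mpr fun hy hyD ↦ hfaith _ hy fun d hd ↦ (hyD d hd).symm) hcard hnilp
end

section
/- Under these hypotheses, the normal Sylow p-subgroup D is abelian. -/
/-!
Suppose that the normal `p`-subgroup `D` is not abelian, and write `Z` for the center of `D`, which
is nontrivial and normal in `G`. Pick `1 ≠ z ∈ Z` and `a ∈ D \ Z`. These are not conjugate, so every
element of order divisible by `p` is conjugate to one of them; in particular all such elements lie
in `D`, and `D \ Z` consists of conjugates of `a`.

If `g` centralizes `z` and has order prime to `p`, then `p` divides the order of `z * g`, so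
`z * g ∈ D` and `g ∈ D`. Hence `C_G(z) ≤ D`, and as the class of `z` lies in `Z \ {1}`, we get
`|G| < |Z| |D|`. On the other hand, `Z` is a proper subgroup of both `D` and `C_G(a)`, so the class
of `a` has at least `|D| / 2` and at most `|G| / (2 |Z|)` elements, whence `|Z| |D| ≤ |G|`.
-/

section Counting

variable {G : Type*} [Group G]

theorem ncard_conjugatesOf_mul_card_centralizer (g : G) :
    (conjugatesOf g).ncard * Nat.card (Subgroup.centralizer ({g} : Set G)) = Nat.card G := by
  have orbit_eq : MulAction.orbit (ConjAct G) g = conjugatesOf g :=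
    Set.ext fun _ => ConjAct.mem_orbit_conjAct.trans isConj_comm
  rw [Subgroup.nat_card_centralizer_nat_card_stabilizer, ← orbit_eq, ← MulAction.index_stabilizer,
    Subgroup.index_mul_card, Nat.card_congr ConjAct.ofConjAct.toEquiv]

theorem two_mul_card_le_card_of_lt {H K : Subgroup G} [Finite K] (hHK : H < K) :
    2 * Nat.card H ≤ Nat.card K := by
  have relIndex_ne_zero : H.relIndex K ≠ 0 := Subgroup.index_ne_zero_of_finite
  have relIndex_ne_one : H.relIndex K ≠ 1 := fun h => hHK.not_ge (Subgroup.relIndex_eq_one.mp h)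
  calc 2 * Nat.card H ≤ H.relIndex K * Nat.card H := Nat.mul_le_mul_right _ (by omega)
    _ = Nat.card K := by
      simpa only [Subgroup.relIndex_bot_left, mul_comm] using
        Subgroup.relIndex_mul_relIndex ⊥ H K bot_le hHK.le

theorem ncard_conjugatesOf_lt_card {N : Subgroup G} [N.Normal] [Finite N] {z : G} (hz : z ∈ N)
    (hz1 : z ≠ 1) : (conjugatesOf z).ncard < Nat.card N := by
  have one_notMem : (1 : G) ∉ conjugatesOf z := fun h => hz1 (isConj_one_right.mp h.symm)
  rw [← SetLike.coe_sort_coe, Nat.card_coe_set_eq]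
  exact Set.ncard_lt_ncard <|
    LE.le.ssubset_of_mem_notMem (Group.conjugates_subset_normal hz) N.one_mem one_notMem

theorem card_lt_card_mul_card_centralizer [Finite G] {N : Subgroup G} [N.Normal] {z : G}
    (hz : z ∈ N) (hz1 : z ≠ 1) :
    Nat.card G < Nat.card N * Nat.card (Subgroup.centralizer ({z} : Set G)) := by
  rw [← ncard_conjugatesOf_mul_card_centralizer z]
  exact Nat.mul_lt_mul_of_pos_right (ncard_conjugatesOf_lt_card hz hz1) Nat.card_pos

theorem card_le_two_mul_ncard_of_lt {H K : Subgroup G} [Finite K] (hHK : H < K) {s : Set G}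
    (hs : s.Finite) (hK : (K : Set G) ⊆ s ∪ H) : Nat.card K ≤ 2 * s.ncard := by
  have card_le : Nat.card K ≤ s.ncard + Nat.card H :=
    (Set.ncard_le_ncard hK (hs.union (Set.toFinite (K : Set G) |>.subset hHK.le))).trans
      (Set.ncard_union_le _ _)
  have := two_mul_card_le_card_of_lt hHK
  omega

theorem card_mul_card_le_card_of_subset_conjugatesOf_union [Finite G] {Z D : Subgroup G} {a : G}
    (hZD : Z < D) (hZa : Z < Subgroup.centralizer {a})
    (hD : (D : Set G) ⊆ conjugatesOf a ∪ Z) : Nat.card Z * Nat.card D ≤ Nat.card G :=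
  calc Nat.card Z * Nat.card D ≤ Nat.card Z * (2 * (conjugatesOf a).ncard) :=
        Nat.mul_le_mul_left _ (card_le_two_mul_ncard_of_lt hZD (Set.toFinite _) hD)
    _ = (conjugatesOf a).ncard * (2 * Nat.card Z) := by ring
    _ ≤ (conjugatesOf a).ncard * Nat.card (Subgroup.centralizer ({a} : Set G)) :=
        Nat.mul_le_mul_left _ (two_mul_card_le_card_of_lt hZa)
    _ = Nat.card G := ncard_conjugatesOf_mul_card_centralizer a

end Counting

section Singular

variable {p : ℕ} {G : Type*} [Group G]

theorem prime_dvd_orderOf_mul_of_commute (hp : p.Prime) {x y : G} (hxy : Commute x y)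
    (hx : p ∣ orderOf x) (hy : ¬ p ∣ orderOf y) : p ∣ orderOf (x * y) := by
  have orderOf_dvd : orderOf x ∣ orderOf (x * y) * orderOf y := by
    simpa using (hxy.mul_left (Commute.refl y)).inv_right.orderOf_mul_dvd_mul_orderOf
  exact (hp.dvd_mul.mp (hx.trans orderOf_dvd)).resolve_right hy

theorem centralizer_le_of_forall_dvd_orderOf_mem (hp : p.Prime) {H : Subgroup G}
    (hH : ∀ g : G, p ∣ orderOf g → g ∈ H) {z : G} (hz : p ∣ orderOf z) :
    Subgroup.centralizer {z} ≤ H := by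
  intro g hg
  have commute : Commute z g := (Subgroup.mem_centralizer_singleton_iff.mp hg).symm
  by_cases hpg : p ∣ orderOf g
  · exact hH g hpg
  · exact (H.mul_mem_cancel_left (hH z hz)).mp
      (hH _ (prime_dvd_orderOf_mul_of_commute hp commute hz hpg))

variable (p G) in
/-- The conjugacy classes of `p`-regular elements of `G`. The number of these classes is `ℓ_p(G)`,
and the complement of this set consists of the classes of elements of order divisible by `p`. -/
def pRegularClasses : Set (ConjClasses G) :=
  {c | ∀ g ∈ c.carrier, ¬ p ∣ orderOf g}

theorem mk_notMem_pRegularClasses {g : G} (hg : p ∣ orderOf g) :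
    ConjClasses.mk g ∉ pRegularClasses p G :=
  fun h => h g ConjClasses.mem_carrier_mk hg

theorem isConj_or_isConj_of_card_conjClasses_le [Finite (ConjClasses G)]
    (hcard : Nat.card (ConjClasses G) ≤ Nat.card (pRegularClasses p G) + 2) {x y g : G}
    (hx : p ∣ orderOf x) (hy : p ∣ orderOf y) (hxy : ¬ IsConj x y) (hg : p ∣ orderOf g) :
    IsConj x g ∨ IsConj y g := by
  by_contra! hne
  have two_lt : 2 < (pRegularClasses p G)ᶜ.ncard :=
    (Set.two_lt_ncard (Set.toFinite _)).mpr
      ⟨_, mk_notMem_pRegularClasses hx, _, mk_notMem_pRegularClasses hy,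
        _, mk_notMem_pRegularClasses hg, by
          simpa only [ne_eq, ConjClasses.mk_eq_mk_iff_isConj] using ⟨hxy, hne⟩⟩
  have := Set.ncard_add_ncard_compl (pRegularClasses p G)
  rw [Nat.card_coe_set_eq] at hcard
  omega

end Singular

section PSubgroup

variable {p : ℕ} {G : Type*} [Group G] {D : Subgroup G}

theorem dvd_orderOf_of_mem_isPGroup (hp : p.Prime) (hD : IsPGroup p D) {g : G} (hg : g ∈ D)
    (hg1 : g ≠ 1) : p ∣ orderOf g := by
  have := Fact.mk hp
  simpa using hD.dvd_orderOf (g := ⟨g, hg⟩) (by simpa using hg1)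

theorem exists_mem_inf_centralizer_ne_one [Finite D] (hp : p.Prime) (hD : IsPGroup p D)
    (hne : D ≠ ⊥) : ∃ z ∈ D ⊓ Subgroup.centralizer (D : Set G), z ≠ 1 := by
  have := Fact.mk hp
  have : Nontrivial D := D.nontrivial_iff_ne_bot.mpr hne
  have := hD.center_nontrivial
  obtain ⟨⟨⟨z, hzD⟩, hz⟩, hz1⟩ := exists_ne (1 : Subgroup.center D)
  refine ⟨z, ⟨hzD, Subgroup.mem_centralizer_iff.mpr fun d hd => ?_⟩, by simpa using hz1⟩
  exact congrArg Subtype.val (Subgroup.mem_center_iff.mp hz ⟨d, hd⟩)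

theorem inf_centralizer_lt_centralizer_singleton {a : G} (haD : a ∈ D)
    (ha : a ∉ Subgroup.centralizer (D : Set G)) :
    D ⊓ Subgroup.centralizer (D : Set G) < Subgroup.centralizer {a} :=
  SetLike.lt_iff_le_and_exists.mpr
    ⟨inf_le_right.trans (Subgroup.centralizer_le (Set.singleton_subset_iff.mpr haD)),
      a, Subgroup.mem_centralizer_singleton_iff.mpr rfl, fun h => ha h.2⟩

theorem stmt_3_general [Finite G] (hp : p.Prime) [D.Normal] (hD : IsPGroup p D)
    (hcard : Nat.card (ConjClasses G) ≤ Nat.card (pRegularClasses p G) + 2) :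
    ∀ a ∈ D, ∀ b ∈ D, a * b = b * a := by
  by_contra! ⟨a, haD, b, hbD, hab⟩
  let Z := D ⊓ Subgroup.centralizer (D : Set G)
  have ha : a ∉ Subgroup.centralizer (D : Set G) := fun h => hab (h b hbD).symm
  have haZ : a ∉ Z := fun h => ha h.2
  have ha1 : a ≠ 1 := fun h => haZ (h ▸ Z.one_mem)
  obtain ⟨z, hzZ, hz1⟩ := exists_mem_inf_centralizer_ne_one hp hD
    fun h : D = ⊥ => ha1 (Subgroup.mem_bot.mp (h ▸ haD))
  have hpz : p ∣ orderOf z := dvd_orderOf_of_mem_isPGroup hp hD hzZ.1 hz1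
  have hpa : p ∣ orderOf a := dvd_orderOf_of_mem_isPGroup hp hD haD ha1
  have hza : ¬ IsConj z a := fun h => haZ (Group.conjugates_subset_normal hzZ h)
  have isConj_or {g : G} (hg : p ∣ orderOf g) : IsConj z g ∨ IsConj a g :=
    isConj_or_isConj_of_card_conjClasses_le hcard hpz hpa hza hg
  have mem_of_dvd (g : G) (hg : p ∣ orderOf g) : g ∈ D :=
    (isConj_or hg).elim (fun h => Group.conjugates_subset_normal hzZ.1 h)
      fun h => Group.conjugates_subset_normal haD h
  have subset_union : (D : Set G) ⊆ conjugatesOf a ∪ Z := fun x hx => by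
    by_cases hx1 : x = 1
    · exact Or.inr (hx1 ▸ Z.one_mem)
    · exact (isConj_or (dvd_orderOf_of_mem_isPGroup hp hD hx hx1)).symm.imp id
        fun h => Group.conjugates_subset_normal hzZ h
  have card_lt : Nat.card G < Nat.card Z * Nat.card D :=
    (card_lt_card_mul_card_centralizer hzZ hz1).trans_le <| Nat.mul_le_mul_left _ <|
      Subgroup.card_le_of_le (centralizer_le_of_forall_dvd_orderOf_mem hp mem_of_dvd hpz)
  exact card_lt.not_ge <| card_mul_card_le_card_of_subset_conjugatesOf_union
    (lt_of_le_of_ne inf_le_left fun h => haZ (h ▸ haD))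
    (inf_centralizer_lt_centralizer_singleton haD ha) subset_union

end PSubgroup

/-- Hypotheses: `G` is a finite group with normal Sylow `p`-subgroup `D`, `E` is a
`p'`-complement acting faithfully on `D`, `k(G) - ℓ_p(G) = 2`, and the centralizer of
every element of `D` of order `p` is `p`-nilpotent. -/
theorem stmt_3 {p : ℕ} (hp : p.Prime) {G : Type*} [Group G] [Fintype G]
    (D E : Subgroup G)
    (hDn : D.Normal)
    (hDpgrp : IsPGroup p D)
    (hDsyl : ¬ p ∣ D.index)
    (hEp' : Nat.Coprime (Nat.card E) p)
    (hDEinf : D ⊓ E = ⊥)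
    (hDEsup : D ⊔ E = ⊤)
    (hfaith : ∀ y ∈ E, (∀ d ∈ D, y * d = d * y) → y = 1)
    (hkl : Nat.card (ConjClasses G) =
      Nat.card {c : ConjClasses G // ∀ g ∈ c.carrier, ¬ p ∣ orderOf g} + 2)
    (hnilp : ∀ u : G, u ∈ D → orderOf u = p →
      ∃ N : Subgroup (Subgroup.centralizer ({u} : Set G)), N.Normal ∧
        Nat.Coprime (Nat.card N) p ∧ ∃ n : ℕ, N.index = p ^ n) :
    ∀ a ∈ D, ∀ b ∈ D, a * b = b * a :=
  stmt_3_general hp hDpgrp hkl.le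
end

section
/- Let p be a prime and G a finite group with a normal Sylow p-subgroup D such that every nontrivial normal subgroup of G has order divisible by p (i.e. O_{p'}(G) = 1). If G has exactly 4 conjugacy classes and exactly 2 conjugacy classes consisting of p-regular elements, then G is isomorphic to the dihedral group of order 10 (in particular p = 5 and |D| = 5). -/
/-!
The nontrivial `p`-regular elements form one class. They lift the nontrivial elements of `G ⧸ D`,
which are therefore conjugate, so `G ⧸ D` has order `2`. Hence `p` is odd, and a nontrivial
`p`-regular `t` is an involution outside `D`, because `t ^ 2` is a `p`-regular element of `D`.

Besides `1`, the four classes split between `D` and its complement as `2 + 1` or as `1 + 2`.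
In the first case the complement consists of involutions, so `t` inverts `D`; then `D` is abelian,
its classes are the sets `{x, x⁻¹}`, and `D = {1, x, x⁻¹, y, y⁻¹}` has order `5`.

In the second case `y` is conjugate to `y ^ 2` for `1 ≠ y ∈ D`. A conjugation by an element of `D`
can send `y` to `y ^ m` only if `m ≡ 1` modulo `p`, and squares lie in `D`, so `4 ≡ 1` and `p = 3`;
likewise `y ^ 3 = 1`. In a group of exponent `3` an element commutes with its conjugates, which
forces `D = {1, y, y⁻¹}`. Then `D` is inverted and uniquely `2`-divisible, so its complement is a
single class after all, a contradiction.
-/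

section ConjClasses

variable {G : Type*} [Group G]

theorem orderOf_eq_of_isConj {a b : G} (h : IsConj a b) : orderOf a = orderOf b :=
  let ⟨c, hc⟩ := h
  hc.orderOf_eq (c : G)

theorem card_conjClasses_le_of_forall_exists_isConj {ι : Type*} [Finite ι] (f : ι → G)
    (hf : ∀ g, ∃ i, IsConj (f i) g) : Nat.card (ConjClasses G) ≤ Nat.card ι := by
  refine Nat.card_le_card_of_surjective (fun i ↦ ConjClasses.mk (f i)) ?_
  rw [Function.Surjective, ConjClasses.forall_isConj]
  simpa only [ConjClasses.mk_eq_mk_iff_isConj] using hf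

theorem exists_isConj_of_pairwise_not_isConj [Finite (ConjClasses G)] {ι : Type*} {f : ι → G}
    (hf : Pairwise fun i j ↦ ¬IsConj (f i) (f j))
    (hcard : Nat.card (ConjClasses G) ≤ Nat.card ι) (g : G) : ∃ i, IsConj (f i) g := by
  have hinj : Function.Injective fun i ↦ ConjClasses.mk (f i) := fun i j hij ↦
    hf.eq (not_not.2 (ConjClasses.mk_eq_mk_iff_isConj.1 hij))
  obtain ⟨i, hi⟩ := (hinj.bijective_of_nat_card_le hcard).surjective (ConjClasses.mk g)
  exact ⟨i, ConjClasses.mk_eq_mk_iff_isConj.1 hi⟩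

theorem exists_forall_isConj_of_card_regular_conjClasses_eq_two {p : ℕ} (hp : p ≠ 1)
    (hl : Nat.card {c : ConjClasses G // ∀ g ∈ c.carrier, ¬p ∣ orderOf g} = 2) :
    ∃ s : G, s ≠ 1 ∧ ¬p ∣ orderOf s ∧ ∀ g : G, g ≠ 1 → ¬p ∣ orderOf g → IsConj s g := by
  have regular_mk {g : G} (hg : ¬p ∣ orderOf g) :
      ∀ a ∈ (ConjClasses.mk g).carrier, ¬p ∣ orderOf a := by
    intro a ha
    rw [ConjClasses.mem_carrier_iff_mk_eq, ConjClasses.mk_eq_mk_iff_isConj] at ha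
    rwa [orderOf_eq_of_isConj ha]
  have regular_one : ¬p ∣ orderOf (1 : G) := by simpa using hp
  obtain ⟨⟨c, hc⟩, hc1, hunique⟩ :=
    (Nat.card_eq_two_iff' ⟨ConjClasses.mk 1, regular_mk regular_one⟩).1 hl
  obtain ⟨s, rfl⟩ := ConjClasses.exists_rep c
  refine ⟨s, fun hs ↦ hc1 (by simp only [hs]), hc s ConjClasses.mem_carrier_mk, fun g hg hgreg ↦ ?_⟩
  have hg1 : ConjClasses.mk g ≠ ConjClasses.mk 1 := by
    rwa [Ne, ConjClasses.mk_eq_mk_iff_isConj, isConj_one_left]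
  have hgs := hunique ⟨ConjClasses.mk g, regular_mk hgreg⟩ fun h ↦ hg1 (congrArg Subtype.val h)
  exact (ConjClasses.mk_eq_mk_iff_isConj.1 (congrArg Subtype.val hgs)).symm

theorem card_eq_two_of_forall_ne_one_isConj [Finite G] {s : G} (hs : s ≠ 1)
    (h : ∀ g : G, g ≠ 1 → IsConj s g) : Nat.card G = 2 := by
  have horbit : MulAction.orbit (ConjAct G) s = {1}ᶜ := by
    ext g
    rw [ConjAct.mem_orbit_conjAct, Set.mem_compl_singleton_iff]
    refine ⟨?_, fun hg ↦ (h g hg).symm⟩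
    rintro hgs rfl
    exact hs (isConj_one_right.1 hgs)
  have hdvd : Nat.card G - 1 ∣ Nat.card G := by
    have := (MulAction.stabilizer (ConjAct G) s).index_dvd_card
    rwa [MulAction.index_stabilizer, horbit, Set.ncard_compl, Set.ncard_singleton] at this
  have hlt : 1 < Nat.card G := Finite.one_lt_card_iff_nontrivial.2 ⟨s, 1, hs⟩
  have hdvd_one : Nat.card G - 1 ∣ 1 := by
    simpa [Nat.sub_sub_self hlt.le] using Nat.dvd_sub hdvd (dvd_refl (Nat.card G - 1))
  have := Nat.dvd_one.1 hdvd_one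
  omega

end ConjClasses

theorem semiconjBy_pow_of_semiconjBy_pow {M : Type*} [Monoid M] {d y : M} {m : ℕ}
    (h : SemiconjBy d y (y ^ m)) (n : ℕ) : SemiconjBy (d ^ n) y (y ^ m ^ n) := by
  induction n with
  | zero => simp
  | succ n ih =>
    rw [pow_succ', pow_succ', pow_mul]
    exact (h.pow_right (m ^ n)).mul_left ih

section PGroup

variable {p : ℕ} [Fact p.Prime] {G : Type*} [Group G] {D : Subgroup G}

theorem dvd_orderOf_of_mem (hD : IsPGroup p D) {g : G} (hg : g ∈ D) (hg1 : g ≠ 1) :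
    p ∣ orderOf g := by
  rw [← Subgroup.orderOf_mk g hg]
  exact hD.dvd_orderOf (by simpa using hg1)

theorem exists_mk_eq_and_not_dvd_orderOf [D.Normal] (hD : IsPGroup p D) (hindex : ¬p ∣ D.index)
    (q : G ⧸ D) : ∃ g : G, (g : G ⧸ D) = q ∧ ¬p ∣ orderOf g := by
  obtain ⟨g, rfl⟩ := QuotientGroup.mk_surjective q
  obtain ⟨k, hk⟩ := hD ⟨g ^ D.index, D.pow_index_mem g⟩
  have hgpow : g ^ (D.index * p ^ k) = 1 := by simpa [Subtype.ext_iff, pow_mul] using hk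
  have hcop : (p ^ k).Coprime D.index :=
    ((Fact.out : p.Prime).coprime_iff_not_dvd.2 hindex).pow_left k
  obtain ⟨n, hn_zero, hn_one⟩ := Nat.chineseRemainder hcop 0 1
  have hmk : (g : G ⧸ D) ^ D.index = 1 := by
    rw [← QuotientGroup.mk_pow, QuotientGroup.eq_one_iff]
    exact D.pow_index_mem g
  refine ⟨g ^ n, ?_, fun hdvd ↦ hindex (hdvd.trans (orderOf_dvd_of_pow_eq_one ?_))⟩
  · calc ((g ^ n : G) : G ⧸ D) = (g : G ⧸ D) ^ n := QuotientGroup.mk_pow D g n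
      _ = (g : G ⧸ D) ^ 1 := pow_eq_pow_iff_modEq.2 (hn_one.of_dvd (orderOf_dvd_of_pow_eq_one hmk))
      _ = g := pow_one _
  · obtain ⟨m, rfl⟩ := (Nat.modEq_zero_iff_dvd).1 hn_zero
    rw [← pow_mul, show p ^ k * m * D.index = D.index * p ^ k * m by ring, pow_mul, hgpow, one_pow]

theorem index_eq_two_of_forall_regular_isConj [D.Normal] (hD : IsPGroup p D)
    (hindex : ¬p ∣ D.index) {s : G} (hs : s ∉ D)
    (h : ∀ g : G, g ≠ 1 → ¬p ∣ orderOf g → IsConj s g) : D.index = 2 := by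
  have : D.FiniteIndex := ⟨fun h0 ↦ hindex (h0 ▸ dvd_zero p)⟩
  refine card_eq_two_of_forall_ne_one_isConj (s := (s : G ⧸ D)) ?_ fun q hq ↦ ?_
  · rwa [Ne, QuotientGroup.eq_one_iff]
  · obtain ⟨g, rfl, hreg⟩ := exists_mk_eq_and_not_dvd_orderOf hD hindex q
    have hg : g ≠ 1 := by
      rintro rfl
      exact hq rfl
    exact (QuotientGroup.mk' D).map_isConj (h g hg hreg)

theorem exists_mem_sq_eq (hD : IsPGroup p D) (hp2 : ¬p ∣ 2) {a : G} (ha : a ∈ D) :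
    ∃ b ∈ D, b ^ 2 = a := by
  obtain ⟨b, hb⟩ := (hD.powEquiv' hp2).surjective ⟨a, ha⟩
  exact ⟨b, b.2, congrArg Subtype.val hb⟩

theorem sq_ne_one_of_mem (hD : IsPGroup p D) (hp2 : ¬p ∣ 2) {a : G} (ha : a ∈ D) (ha1 : a ≠ 1) :
    a ^ 2 ≠ 1 := fun hsq ↦
  hp2 ((dvd_orderOf_of_mem hD ha ha1).trans (orderOf_dvd_of_pow_eq_one hsq))

theorem modEq_one_of_semiconjBy_pow (hD : IsPGroup p D) {d y : G} (hd : d ∈ D) (hy : p ∣ orderOf y)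
    {m : ℕ} (h : SemiconjBy d y (y ^ m)) : m ≡ 1 [MOD p] := by
  obtain ⟨k, hk⟩ := hD ⟨d, hd⟩
  have hdk : d ^ p ^ k = 1 := by simpa [Subtype.ext_iff] using hk
  have hpow : y ^ m ^ p ^ k = y ^ 1 := by
    simpa [hdk] using (semiconjBy_pow_of_semiconjBy_pow h (p ^ k)).eq.symm
  have hmod : m ^ p ^ k ≡ 1 [MOD p] := (pow_eq_pow_iff_modEq.1 hpow).of_dvd hy
  rw [← ZMod.natCast_eq_natCast_iff] at hmod ⊢
  simpa using hmod

theorem sq_modEq_one_of_isConj_pow (hD : IsPGroup p D) (hindex : D.index = 2) {y : G}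
    (hy : p ∣ orderOf y) {m : ℕ} (h : IsConj y (y ^ m)) : m ^ 2 ≡ 1 [MOD p] := by
  obtain ⟨c, hc⟩ := h
  exact modEq_one_of_semiconjBy_pow hD (D.sq_mem_of_index_two hindex c) hy
    (semiconjBy_pow_of_semiconjBy_pow hc 2)

end PGroup

theorem commute_conj_of_pow_three_eq_one {G : Type*} [Group G] {a d : G} (hd : d ^ 3 = 1)
    (had : (a * d) ^ 3 = 1) (had' : (a * d⁻¹) ^ 3 = 1) : Commute a (d * a * d⁻¹) := by
  have hdd : d * d = d⁻¹ := eq_inv_of_mul_eq_one_left (by rw [← hd]; simp [pow_succ])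
  have h : a * (d * a * d⁻¹) * (d⁻¹ * a * d) = 1 :=
    calc a * (d * a * d⁻¹) * (d⁻¹ * a * d) = a * d * a * (d * d)⁻¹ * a * d := by group
      _ = (a * d) ^ 3 := by simp only [hdd, inv_inv, pow_three', mul_assoc]
      _ = 1 := had
  have h' : a * (d⁻¹ * a * d) * (d * a * d⁻¹) = 1 :=
    calc a * (d⁻¹ * a * d) * (d * a * d⁻¹) = a * d⁻¹ * a * (d * d) * a * d⁻¹ := by group
      _ = (a * d⁻¹) ^ 3 := by simp only [hdd, pow_three', mul_assoc]
      _ = 1 := had'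
  rw [mul_eq_one_comm, ← mul_assoc] at h'
  exact (eq_inv_of_mul_eq_one_left h).trans (eq_inv_of_mul_eq_one_left h').symm

/-- The homomorphism out of a dihedral group sending the rotations to `G` by `f` and the reflection
`sr 0` to an involution `t` which inverts the image of `f`. -/
def dihedralLift {G : Type*} [Group G] {n : ℕ} {t : G} (f : Multiplicative (ZMod n) →* G)
    (htsq : t ^ 2 = 1) (hinv : ∀ i, t * f i * t⁻¹ = (f i)⁻¹) : DihedralGroup n →* G :=
  have hswap (i : ZMod n) : f (.ofAdd i) * t = t * f (.ofAdd (-i)) := by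
    rw [ofAdd_neg, map_inv, ← hinv, ← mul_assoc, ← mul_assoc, ← sq, htsq, one_mul,
      inv_eq_of_mul_eq_one_left ((sq t).symm.trans htsq)]
  MonoidHom.mk' (fun
    | .r i => f (.ofAdd i)
    | .sr i => t * f (.ofAdd i)) (by
      rintro (i | i) (j | j)
      · simp only [DihedralGroup.r_mul_r, ofAdd_add, map_mul]
      · simp only [DihedralGroup.r_mul_sr, sub_eq_neg_add, ofAdd_add, map_mul]
        rw [← mul_assoc, ← mul_assoc, hswap]
      · simp only [DihedralGroup.sr_mul_r, ofAdd_add, map_mul, mul_assoc]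
      · simp only [DihedralGroup.sr_mul_sr, sub_eq_neg_add, ofAdd_add, map_mul]
        rw [mul_assoc t, ← mul_assoc (f _) t, hswap, ← mul_assoc, ← mul_assoc, ← sq, htsq, one_mul])

/-- The element `t` acts by inversion when it conjugates elements of the subgroup `D`. -/
def ConjInverts {G : Type*} [Group G] (t : G) (D : Subgroup G) : Prop :=
  ∀ x ∈ D, t * x * t⁻¹ = x⁻¹

section IndexTwo

variable {G : Type*} [Group G] {D : Subgroup G} {t : G}

theorem not_isConj_of_mem_of_notMem [D.Normal] {a b : G} (ha : a ∈ D) (hb : b ∉ D) :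
    ¬IsConj a b := by
  intro h
  obtain ⟨c, rfl⟩ := isConj_iff.1 h
  exact hb (Subgroup.Normal.conj_mem inferInstance a ha c)

theorem conjInverts_of_forall_notMem_sq_eq_one (ht : t ∉ D) (h : ∀ g ∉ D, g ^ 2 = 1) :
    ConjInverts t D := by
  intro x hx
  have htx : (t * x) ^ 2 = 1 := h _ fun htx ↦ ht ((D.mul_mem_cancel_right hx).1 htx)
  have ht_inv : t⁻¹ = t := inv_eq_of_mul_eq_one_left (by rw [← sq, h t ht])
  rw [ht_inv]
  exact eq_inv_of_mul_eq_one_left (by rw [← htx, sq, mul_assoc _ t])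

theorem exists_mem_conj_eq_or_conj_eq_inv_of_isConj (hindex : D.index = 2) (ht : t ∉ D) {a b : G}
    (hta : t * a * t⁻¹ = a⁻¹) (hab : IsConj a b) :
    ∃ d ∈ D, d * a * d⁻¹ = b ∨ d * a * d⁻¹ = b⁻¹ := by
  obtain ⟨c, rfl⟩ := isConj_iff.1 hab
  by_cases hc : c ∈ D
  · exact ⟨c, hc, .inl rfl⟩
  · refine ⟨c * t, by simp [D.mul_mem_iff_of_index_two hindex, hc, ht], .inr ?_⟩
    calc c * t * a * (c * t)⁻¹ = c * (t * a * t⁻¹) * c⁻¹ := by group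
      _ = (c * a * c⁻¹)⁻¹ := by rw [hta, conj_inv]

theorem eq_or_eq_inv_of_isConj_of_forall_commute (hindex : D.index = 2) (ht : t ∉ D) {a b : G}
    (hta : t * a * t⁻¹ = a⁻¹) (hcomm : ∀ d ∈ D, Commute d a) (hab : IsConj a b) :
    b = a ∨ b = a⁻¹ := by
  obtain ⟨d, hd, hdb⟩ := exists_mem_conj_eq_or_conj_eq_inv_of_isConj hindex ht hta hab
  rw [(hcomm d hd).eq, mul_inv_cancel_right] at hdb
  exact hdb.imp Eq.symm fun h ↦ (inv_eq_iff_eq_inv.1 h.symm)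

theorem commute_of_isConj_of_pow_three_eq_one (hindex : D.index = 2) (ht : t ∉ D)
    (hcube : ∀ z ∈ D, z ^ 3 = 1) {a b : G} (ha : a ∈ D) (hta : t * a * t⁻¹ = a⁻¹)
    (hab : IsConj a b) : Commute a b := by
  have hconj {d : G} (hd : d ∈ D) : Commute a (d * a * d⁻¹) :=
    commute_conj_of_pow_three_eq_one (hcube d hd) (hcube _ (D.mul_mem ha hd))
      (hcube _ (D.mul_mem ha (D.inv_mem hd)))
  obtain ⟨d, hd, rfl | hdb⟩ := exists_mem_conj_eq_or_conj_eq_inv_of_isConj hindex ht hta hab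
  · exact hconj hd
  · exact Commute.inv_right_iff.1 (hdb ▸ hconj hd)

namespace ConjInverts

theorem commute (h : ConjInverts t D) {a b : G} (ha : a ∈ D) (hb : b ∈ D) : Commute a b := by
  have key : a⁻¹ * b⁻¹ = (a * b)⁻¹ := by
    rw [← h a ha, ← h b hb, ← h _ (D.mul_mem ha hb), conj_mul]
  rwa [← mul_inv_rev, inv_inj, eq_comm] at key

theorem isConj_of_notMem (h : ConjInverts t D) (hindex : D.index = 2) (ht : t ∉ D)
    (hsq : ∀ a ∈ D, ∃ b ∈ D, b ^ 2 = a) {g : G} (hg : g ∉ D) : IsConj t g := by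
  have hmem : t⁻¹ * g ∈ D := by simp [D.mul_mem_iff_of_index_two hindex, ht, hg]
  obtain ⟨b, hb, hbsq⟩ := hsq _ hmem
  refine isConj_iff.2 ⟨b⁻¹, ?_⟩
  have hbt : b⁻¹ * t = t * b := by rw [← h b hb, inv_mul_cancel_right]
  calc b⁻¹ * t * b⁻¹⁻¹ = t * b ^ 2 := by rw [hbt, inv_inv, sq, mul_assoc]
    _ = g := by rw [hbsq, mul_inv_cancel_left]

theorem card_eq_five (h : ConjInverts t D) (hindex : D.index = 2) (ht : t ∉ D)
    (hsq : ∀ z ∈ D, z ≠ 1 → z ^ 2 ≠ 1) {x y : G} (hx : x ∈ D) (hy : y ∈ D) (hx1 : x ≠ 1)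
    (hy1 : y ≠ 1) (hxy : ¬IsConj x y)
    (hcover : ∀ z ∈ D, z ≠ 1 → IsConj x z ∨ IsConj y z) : Nat.card D = 5 := by
  classical
  have eq_or_eq_inv {a b : G} (ha : a ∈ D) (hab : IsConj a b) : b = a ∨ b = a⁻¹ :=
    eq_or_eq_inv_of_isConj_of_forall_commute hindex ht (h a ha) (fun d hd ↦ h.commute hd ha) hab
  have hcoe : (D : Set G) = ({1, x, x⁻¹, y, y⁻¹} : Finset G) := by
    ext z
    simp only [SetLike.mem_coe, Finset.coe_insert, Finset.coe_singleton, Set.mem_insert_iff,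
      Set.mem_singleton_iff]
    constructor
    · intro hz
      by_cases hz1 : z = 1
      · exact .inl hz1
      · rcases hcover z hz hz1 with hxz | hyz
        · have := eq_or_eq_inv hx hxz
          tauto
        · have := eq_or_eq_inv hy hyz
          tauto
    · rintro (rfl | rfl | rfl | rfl | rfl) <;> simp [*]
  have hxy_ne : x ≠ y := by
    rintro rfl
    exact hxy (.refl x)
  have hx_inv_ne : x⁻¹ ≠ y := by
    rintro rfl
    exact hxy (isConj_iff.2 ⟨t, h x hx⟩)
  have hcard : Finset.card {1, x, x⁻¹, y, y⁻¹} = 5 := by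
    have hx_ne_inv : x ≠ y⁻¹ := fun hxy' ↦ hx_inv_ne (inv_eq_iff_eq_inv.2 hxy')
    have hne_inv {z : G} (hz : z ∈ D) (hz1 : z ≠ 1) : z ≠ z⁻¹ := fun heq ↦
      hsq z hz hz1 (by rw [sq, mul_eq_one_iff_eq_inv, ← heq])
    have := hne_inv hx hx1
    have := hne_inv hy hy1
    simp [Finset.card_insert_of_notMem, *, Ne.symm]
  rw [← hcard, ← Set.ncard_coe_finset, ← hcoe, ← Nat.card_coe_set_eq]
  rfl

theorem nonempty_mulEquiv_dihedralGroup [IsCyclic D] (h : ConjInverts t D) (hindex : D.index = 2)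
    (ht : t ∉ D) (htsq : t ^ 2 = 1) : Nonempty (G ≃* DihedralGroup (Nat.card D)) := by
  let e : Multiplicative (ZMod (Nat.card D)) ≃* D := zmodCyclicMulEquiv inferInstance
  let φ : DihedralGroup (Nat.card D) →* G :=
    dihedralLift (D.subtype.comp e.toMonoidHom) htsq fun i ↦ h _ (e i).2
  have hr (i : ZMod (Nat.card D)) : φ (.r i) = e (.ofAdd i) := rfl
  have hsr (i : ZMod (Nat.card D)) : φ (.sr i) = t * e (.ofAdd i) := rfl
  have hsr_notMem (i : ZMod (Nat.card D)) : t * (e (.ofAdd i) : G) ∉ D :=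
    fun hmem ↦ ht ((D.mul_mem_cancel_right (e _).2).1 hmem)
  have hinj : Function.Injective φ := by
    rintro (i | i) (j | j) hij <;> simp only [hr, hsr] at hij
    · simpa using hij
    · exact absurd (hij ▸ (e _).2) (hsr_notMem j)
    · exact absurd (hij ▸ (e _).2) (hsr_notMem i)
    · simpa using hij
  have hsurj : Function.Surjective φ := by
    intro g
    by_cases hg : g ∈ D
    · exact ⟨.r (e.symm ⟨g, hg⟩).toAdd, by simp [hr]⟩
    · have htg : t⁻¹ * g ∈ D := by simp [D.mul_mem_iff_of_index_two hindex, ht, hg]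
      exact ⟨.sr (e.symm ⟨t⁻¹ * g, htg⟩).toAdd, by simp [hsr]⟩
  exact ⟨(MulEquiv.ofBijective φ ⟨hinj, hsurj⟩).symm⟩

end ConjInverts

end IndexTwo

section SingleClass

variable {p : ℕ} [Fact p.Prime] {G : Type*} [Group G] {D : Subgroup G}

theorem pow_eq_one_of_forall_isConj (hD : IsPGroup p D) (hindex : D.index = 2)
    (hconj : ∀ x ∈ D, x ≠ 1 → ∀ y ∈ D, y ≠ 1 → IsConj x y) {y : G} (hy : y ∈ D) : y ^ p = 1 := by
  by_contra hyp
  have hy1 : y ≠ 1 := by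
    rintro rfl
    exact hyp (one_pow p)
  have hmod := sq_modEq_one_of_isConj_pow hD hindex (dvd_orderOf_of_mem hD hy hy1)
    (hconj y hy hy1 _ (D.pow_mem hy p) hyp)
  have hdvd : p ∣ 1 := (hmod.dvd_iff dvd_rfl).1 (dvd_pow_self p two_ne_zero)
  exact (Fact.out : p.Prime).not_dvd_one hdvd

theorem eq_three_of_isConj_sq (hD : IsPGroup p D) (hindex : D.index = 2) {y : G}
    (hy : p ∣ orderOf y) (h : IsConj y (y ^ 2)) : p = 3 := by
  have hmod : 2 ^ 2 ≡ 1 [MOD p] := sq_modEq_one_of_isConj_pow hD hindex hy h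
  have hdvd : p ∣ 3 := (Nat.modEq_iff_dvd' (by norm_num)).1 hmod.symm
  exact (Nat.prime_dvd_prime_iff_eq Fact.out Nat.prime_three).1 hdvd

theorem notMem_of_semiconjBy_sq (hD : IsPGroup p D) {t y : G} (hy : p ∣ orderOf y)
    (h : SemiconjBy t y (y ^ 2)) : t ∉ D := by
  intro ht
  have hmod : 2 ≡ 1 [MOD p] := modEq_one_of_semiconjBy_pow hD ht hy h
  have hdvd : p ∣ 1 := (Nat.modEq_iff_dvd' one_le_two).1 hmod.symm
  exact (Fact.out : p.Prime).not_dvd_one hdvd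

theorem exists_notMem_conjInverts_of_forall_isConj (hD : IsPGroup p D) (hp2 : ¬p ∣ 2)
    (hindex : D.index = 2) (hconj : ∀ x ∈ D, x ≠ 1 → ∀ y ∈ D, y ≠ 1 → IsConj x y) :
    ∃ t ∉ D, ConjInverts t D := by
  rcases D.bot_or_exists_ne_one with rfl | ⟨y, hy, hy1⟩
  · obtain ⟨t, ht, -⟩ := Subgroup.index_eq_two_iff_exists_notMem_and.1 hindex
    exact ⟨t, ht, by simp [ConjInverts]⟩
  have hpy : p ∣ orderOf y := dvd_orderOf_of_mem hD hy hy1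
  have hy_sq : IsConj y (y ^ 2) :=
    hconj y hy hy1 _ (D.pow_mem hy 2) (sq_ne_one_of_mem hD hp2 hy hy1)
  obtain rfl : p = 3 := eq_three_of_isConj_sq hD hindex hpy hy_sq
  have hcube : ∀ z ∈ D, z ^ 3 = 1 := fun z ↦ pow_eq_one_of_forall_isConj hD hindex hconj
  obtain ⟨t, ht⟩ := isConj_iff.1 hy_sq
  have htD : t ∉ D := notMem_of_semiconjBy_sq hD hpy (mul_inv_eq_iff_eq_mul.1 ht)
  have hty : t * y * t⁻¹ = y⁻¹ :=
    ht.trans (eq_inv_of_mul_eq_one_left (by rw [← pow_succ, hcube y hy]))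
  have hcomm : ∀ z ∈ D, Commute z y := by
    intro z hz
    by_cases hz1 : z = 1
    · exact hz1 ▸ .one_left y
    · exact (commute_of_isConj_of_pow_three_eq_one hindex htD hcube hy hty
        (hconj y hy hy1 z hz hz1)).symm
  refine ⟨t, htD, fun z hz ↦ ?_⟩
  by_cases hz1 : z = 1
  · simp [hz1]
  obtain rfl | rfl := eq_or_eq_inv_of_isConj_of_forall_commute hindex htD hty hcomm
    (hconj y hy hy1 z hz hz1)
  · exact hty
  · rw [← conj_inv, hty]

end SingleClass

section FourClasses

variable {G : Type*} [Group G] {D : Subgroup G}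

theorem card_conjClasses_le_three {t : G} (hD : ∀ x ∈ D, x ≠ 1 → ∀ y ∈ D, y ≠ 1 → IsConj x y)
    (hcompl : ∀ g ∉ D, IsConj t g) : Nat.card (ConjClasses G) ≤ 3 := by
  obtain ⟨x, hx⟩ : ∃ x, ∀ z ∈ D, z ≠ 1 → IsConj x z := by
    rcases D.bot_or_exists_ne_one with rfl | ⟨x, hxD, hx1⟩
    · exact ⟨1, fun z hz hz1 ↦ absurd (Subgroup.mem_bot.1 hz) hz1⟩
    · exact ⟨x, hD x hxD hx1⟩
  have hcover (g : G) : ∃ i, IsConj (![1, x, t] i) g := by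
    by_cases hg : g ∈ D
    · by_cases hg1 : g = 1
      · exact ⟨0, hg1.symm ▸ .refl 1⟩
      · exact ⟨1, hx g hg hg1⟩
    · exact ⟨2, hcompl g hg⟩
  simpa using card_conjClasses_le_of_forall_exists_isConj ![1, x, t] hcover

theorem exists_mem_not_isConj_of_card_conjClasses_eq_four {p : ℕ} [Fact p.Prime]
    (hD : IsPGroup p D) (hp2 : ¬p ∣ 2) (hindex : D.index = 2)
    (hk : Nat.card (ConjClasses G) = 4) :
    ∃ x ∈ D, x ≠ 1 ∧ ∃ y ∈ D, y ≠ 1 ∧ ¬IsConj x y := by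
  by_contra! hconj
  obtain ⟨t, htD, ht⟩ := exists_notMem_conjInverts_of_forall_isConj hD hp2 hindex hconj
  have := card_conjClasses_le_three hconj fun g ↦
    ht.isConj_of_notMem hindex htD fun _ ↦ exists_mem_sq_eq hD hp2
  omega

theorem eq_one_or_isConj_of_card_conjClasses_eq_four [D.Normal]
    (hk : Nat.card (ConjClasses G) = 4) {t x y : G} (ht : t ∉ D) (hx : x ∈ D) (hx1 : x ≠ 1)
    (hy : y ∈ D) (hy1 : y ≠ 1) (hxy : ¬IsConj x y) (g : G) :
    g = 1 ∨ IsConj t g ∨ IsConj x g ∨ IsConj y g := by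
  have : Finite (ConjClasses G) := Nat.finite_of_card_ne_zero (by omega)
  have hpairwise : Pairwise fun i j ↦ ¬IsConj (![1, t, x, y] i) (![1, t, x, y] j) := by
    have ht1 : t ≠ 1 := fun h ↦ ht (h ▸ D.one_mem)
    have hxt := not_isConj_of_mem_of_notMem hx ht
    have hyt := not_isConj_of_mem_of_notMem hy ht
    simp [Pairwise, Fin.forall_fin_succ, -isConj_iff, ht1, hx1, hy1, hxt,
      mt IsConj.symm hxt, hyt, mt IsConj.symm hyt, hxy, mt IsConj.symm hxy]
  simpa [Fin.exists_fin_succ, -isConj_iff, eq_comm] using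
    exists_isConj_of_pairwise_not_isConj hpairwise (by simp [hk]) g

theorem conjInverts_and_card_eq_five_of_card_conjClasses_eq_four {p : ℕ} [Fact p.Prime] [D.Normal]
    (hD : IsPGroup p D) (hp2 : ¬p ∣ 2) (hindex : D.index = 2)
    (hk : Nat.card (ConjClasses G) = 4) {t : G} (htD : t ∉ D) (htsq : t ^ 2 = 1) :
    ConjInverts t D ∧ Nat.card D = 5 := by
  obtain ⟨x, hx, hx1, y, hy, hy1, hxy⟩ :=
    exists_mem_not_isConj_of_card_conjClasses_eq_four hD hp2 hindex hk
  have hclasses := eq_one_or_isConj_of_card_conjClasses_eq_four hk htD hx hx1 hy hy1 hxy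
  have htconj : ∀ g ∉ D, IsConj t g := by
    intro g hg
    rcases hclasses g with rfl | htg | hxg | hyg
    · exact absurd D.one_mem hg
    · exact htg
    · exact absurd hxg (not_isConj_of_mem_of_notMem hx hg)
    · exact absurd hyg (not_isConj_of_mem_of_notMem hy hg)
  have hinv : ConjInverts t D := conjInverts_of_forall_notMem_sq_eq_one htD fun g hg ↦
    isConj_one_right.1 (htsq ▸ (htconj g hg).pow 2)
  refine ⟨hinv, hinv.card_eq_five hindex htD (fun z ↦ sq_ne_one_of_mem hD hp2) hx hy hx1 hy1 hxy ?_⟩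
  intro z hz hz1
  have hzt : ¬IsConj t z := mt IsConj.symm (not_isConj_of_mem_of_notMem hz htD)
  have := hclasses z
  tauto

end FourClasses

theorem stmt_11_general {p : ℕ} (hp : p.Prime) {G : Type*} [Group G] (D : Subgroup G)
    (hDn : D.Normal) (hDpgrp : IsPGroup p D) (hDsyl : ¬p ∣ D.index)
    (hk : Nat.card (ConjClasses G) = 4)
    (hl : Nat.card {c : ConjClasses G // ∀ g ∈ c.carrier, ¬p ∣ orderOf g} = 2) :
    p = 5 ∧ Nat.card D = 5 ∧ Nonempty (G ≃* DihedralGroup 5) := by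
  have := Fact.mk hp
  have : Fact (Nat.Prime 5) := ⟨Nat.prime_five⟩
  obtain ⟨t, ht1, htreg, hreg⟩ :=
    exists_forall_isConj_of_card_regular_conjClasses_eq_two hp.ne_one hl
  have htD : t ∉ D := fun htD ↦ htreg (dvd_orderOf_of_mem hDpgrp htD ht1)
  have hindex : D.index = 2 := index_eq_two_of_forall_regular_isConj hDpgrp hDsyl htD hreg
  have htsq : t ^ 2 = 1 := by
    by_contra htsq
    exact htreg ((dvd_orderOf_of_mem hDpgrp (D.sq_mem_of_index_two hindex t) htsq).trans
      (orderOf_pow_dvd 2))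
  obtain ⟨hinv, hcard⟩ := conjInverts_and_card_eq_five_of_card_conjClasses_eq_four hDpgrp
    (hindex ▸ hDsyl) hindex hk htD htsq
  have hp5 : p ∣ 5 := hcard ▸ hDpgrp.card_eq_or_dvd.resolve_left (by omega)
  have : IsCyclic D := isCyclic_of_prime_card hcard
  exact ⟨(Nat.prime_dvd_prime_iff_eq hp Nat.prime_five).1 hp5, hcard,
    hcard ▸ hinv.nonempty_mulEquiv_dihedralGroup hindex htD htsq⟩

/-- If a finite group `G` has a normal Sylow `p`-subgroup `D`, `O_{p'}(G) = 1`, exactly `4`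
conjugacy classes and exactly `2` conjugacy classes of `p`-regular elements, then
`p = 5`, `|D| = 5`, and `G` is isomorphic to the dihedral group of order `10`. -/
theorem stmt_11 {p : ℕ} (hp : p.Prime) {G : Type*} [Group G] [Fintype G]
    (D : Subgroup G)
    (hDn : D.Normal)
    (hDpgrp : IsPGroup p D)
    (hDsyl : ¬ p ∣ D.index)
    (hOp' : ∀ N : Subgroup G, N.Normal → N ≠ ⊥ → p ∣ Nat.card N)
    (hk : Nat.card (ConjClasses G) = 4)
    (hl : Nat.card {c : ConjClasses G // ∀ g ∈ c.carrier, ¬ p ∣ orderOf g} = 2) :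
    p = 5 ∧ Nat.card D = 5 ∧ Nonempty (G ≃* DihedralGroup 5) :=
  stmt_11_general hp D hDn hDpgrp hDsyl hk hl
end
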